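/- arXiv:2307.07180 — 2 statements merged into one kernel-verified Lean document; each statement's English description precedes it below -/
import Mathlib

section
/- Let G be a finite multigraph in which every vertex has even degree (i.e., G is an Eulerian multigraph, not necessarily connected), and let U be the set of vertices that have odd degree with respect to some edge subset F ⊆ E of another multigraph on the same vertex set. If every connected component of G contains an even number of vertices of U, then the edge set of G can be partitioned into two edge sets J₁ and J₂ such that each Jᵢ, viewed as a multigraph on V, has odd degree exactly at the vertices of U (i.e., each Jᵢ is a U-join). Consequently min(w(J₁), w(J₂)) ≤ w(E(G))/2 for any nonnegative edge weights w. -/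
open scoped Classical

noncomputable def deg {V : Type*} (E : Multiset (Sym2 V)) (v : V) : ℕ :=
  (E.filter (fun e => v ∈ e)).card

def Connects {V : Type*} (E : Multiset (Sym2 V)) : V → V → Prop :=
  Relation.ReflTransGen (fun a b => s(a, b) ∈ E)

noncomputable def mweight {V : Type*} (w : Sym2 V → ℝ) (E : Multiset (Sym2 V)) : ℝ :=
  (E.map w).sum

def IsMetric {V : Type*} (w : Sym2 V → ℝ) : Prop :=
  (∀ e, 0 ≤ w e) ∧ ∀ a b c : V, w s(a, c) ≤ w s(a, b) + w s(b, c)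

def IsTour {V : Type*} (D : Finset V) (T : Multiset (Sym2 V)) : Prop :=
  (∀ e ∈ T, ¬ Sym2.IsDiag e) ∧ (∀ v, Even (deg T v)) ∧ ∀ v, ∃ d ∈ D, Connects T v d

def IsCSF {V : Type*} (D : Finset V) (F : Finset (Sym2 V)) : Prop :=
  (∀ e ∈ F, ¬ Sym2.IsDiag e) ∧
  (SimpleGraph.fromEdgeSet (↑F : Set (Sym2 V))).IsAcyclic ∧
  ∀ v, ∃ d ∈ D, Connects F.val v d

def IsPM {V : Type*} (U : Finset V) (M : Multiset (Sym2 V)) : Prop :=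
  (∀ e ∈ M, ¬ Sym2.IsDiag e) ∧ ∀ v, deg M v = if v ∈ U then 1 else 0

def IsRPPSol {V : Type*} (R J : Multiset (Sym2 V)) : Prop :=
  (∀ e ∈ J, ¬ Sym2.IsDiag e) ∧ (∀ v, Even (deg (R + J) v)) ∧
  ∀ u v : V, (∃ e ∈ R + J, u ∈ e) → (∃ e ∈ R + J, v ∈ e) → Connects (R + J) u v
theorem deg_cons_cast {V : Type*} (J : Multiset (Sym2 V)) (b c v : V) (h : b ≠ c) :
    (deg (s(b, c) ::ₘ J) v : ZMod 2) =
      deg J v + (if v = b then 1 else 0) + (if v = c then 1 else 0) := by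
  unfold deg
  by_cases h1 : v = b
  · subst h1
    simp [h]
  · by_cases h2 : v = c
    · subst h2
      simp [h1]
    · simp [h1, h2]

theorem zmod_two_add_self (x : ZMod 2) : x + x = 0 := CharTwo.add_self_eq_zero x

theorem path_flip {V : Type*} (E : Multiset (Sym2 V)) (hnd : ∀ e ∈ E, ¬ Sym2.IsDiag e)
    (a b : V) (h : Connects E a b) (J : Multiset (Sym2 V)) (hJ : J ≤ E) :
    ∃ J' ≤ E, ∀ v, (deg J' v : ZMod 2) =
      deg J v + (if v = a then 1 else 0) + (if v = b then 1 else 0) := by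
  unfold Connects at h
  induction h with
  | refl =>
    refine ⟨J, hJ, fun v => ?_⟩
    rw [add_assoc, zmod_two_add_self, add_zero]
  | @tail b c _ hbc ih =>
    obtain ⟨J', hJ', hd⟩ := ih
    have hne : b ≠ c := fun hh => hnd _ hbc (by simp [hh])
    by_cases hm : s(b, c) ∈ J'
    · refine ⟨J'.erase s(b, c), (Multiset.erase_le _ _).trans hJ', fun v => ?_⟩
      have h1 := deg_cons_cast (J'.erase s(b, c)) b c v hne
      rw [Multiset.cons_erase hm, hd v] at h1
      have h2 := zmod_two_add_self (if v = b then 1 else 0)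
      have h3 := zmod_two_add_self (if v = c then 1 else 0)
      linear_combination -h1 - h3
    · refine ⟨s(b, c) ::ₘ J', ?_, fun v => ?_⟩
      · rw [Multiset.le_iff_count]
        intro e
        by_cases he : e = s(b, c)
        · subst he
          rw [Multiset.count_cons_self, Multiset.count_eq_zero_of_notMem hm]
          exact Multiset.count_pos.2 hbc
        · rw [Multiset.count_cons_of_ne he]
          exact Multiset.le_iff_count.1 hJ' e
      · rw [deg_cons_cast J' b c v hne, hd v]
        have h2 := zmod_two_add_self (if v = b then 1 else 0)
        linear_combination h2

theorem connects_symm {V : Type*} (E : Multiset (Sym2 V)) {a b : V} (h : Connects E a b) :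
    Connects E b a := by
  unfold Connects at h ⊢
  induction h with
  | refl => exact Relation.ReflTransGen.refl
  | tail _ hbc ih => exact Relation.ReflTransGen.head (by rwa [Sym2.eq_swap]) ih

theorem exists_join {V : Type*} (E : Multiset (Sym2 V)) (hnd : ∀ e ∈ E, ¬ Sym2.IsDiag e)
    (n : ℕ) : ∀ U : Finset V, U.card = n →
    (∀ v, Even (U.filter (fun u => Connects E v u)).card) →
    ∃ J ≤ E, ∀ v, (deg J v : ZMod 2) = if v ∈ U then 1 else 0 := by
  induction n using Nat.strong_induction_on with
  | _ n ih =>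
  intro U hn hc
  rcases U.eq_empty_or_nonempty with rfl | ⟨a, ha⟩
  · exact ⟨0, Multiset.zero_le _, fun v => by simp [deg]⟩
  have haa : a ∈ U.filter (fun u => Connects E a u) :=
    Finset.mem_filter.2 ⟨ha, Relation.ReflTransGen.refl⟩
  have hlt : 1 < (U.filter (fun u => Connects E a u)).card := by
    have h0 := Finset.card_pos.2 ⟨a, haa⟩
    obtain ⟨k, hk⟩ := hc a
    omega
  obtain ⟨b, hb, hba⟩ := Finset.exists_mem_ne hlt a
  obtain ⟨hbU, hab⟩ := Finset.mem_filter.1 hb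
  have hbe : b ∈ U.erase a := Finset.mem_erase.2 ⟨hba, hbU⟩
  have c1 := Finset.card_erase_add_one ha
  have c2 := Finset.card_erase_add_one hbe
  obtain ⟨J, hJ, hd⟩ := ih ((U.erase a).erase b).card (by omega) _ rfl (by
    intro v
    rw [Finset.filter_erase, Finset.filter_erase]
    by_cases hv : Connects E v a
    · have hvb : Connects E v b := Relation.ReflTransGen.trans hv hab
      have ha' : a ∈ U.filter (fun u => Connects E v u) := Finset.mem_filter.2 ⟨ha, hv⟩
      have hb' : b ∈ (U.filter (fun u => Connects E v u)).erase a :=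
        Finset.mem_erase.2 ⟨hba, Finset.mem_filter.2 ⟨hbU, hvb⟩⟩
      have d1 := Finset.card_erase_add_one ha'
      have d2 := Finset.card_erase_add_one hb'
      obtain ⟨k, hk⟩ := hc v
      exact ⟨k - 1, by omega⟩
    · have hvb : ¬ Connects E v b := fun h =>
        hv (Relation.ReflTransGen.trans h (connects_symm E hab))
      rw [Finset.erase_eq_of_notMem (a := a) (by simp [hv]),
        Finset.erase_eq_of_notMem (by simp [hvb])]
      exact hc v)
  obtain ⟨J', hJ', hd'⟩ := path_flip E hnd a b hab J hJ
  refine ⟨J', hJ', fun v => ?_⟩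
  rw [hd' v, hd v]
  by_cases h1 : v = a
  · subst h1
    simp [ha, Ne.symm hba]
  · by_cases h2 : v = b
    · subst h2
      simp [hbU, h1]
    · simp [h1, h2]

theorem stmt1 {V : Type*} [Fintype V] (E F : Multiset (Sym2 V)) (U : Set V)
    (w : Sym2 V → ℝ) (hw : ∀ e, 0 ≤ w e)
    (hnd : ∀ e ∈ E, ¬ Sym2.IsDiag e)
    (heven : ∀ v, Even (deg E v))
    (hU : ∀ v, v ∈ U ↔ Odd (deg F v))
    (hcomp : ∀ v : V, Even {u | Connects E v u ∧ u ∈ U}.ncard) :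
    ∃ J₁ J₂ : Multiset (Sym2 V), J₁ + J₂ = E ∧
      (∀ v, Odd (deg J₁ v) ↔ v ∈ U) ∧ (∀ v, Odd (deg J₂ v) ↔ v ∈ U) ∧
      min (mweight w J₁) (mweight w J₂) ≤ mweight w E / 2 := by
  obtain ⟨J, hJ, hd⟩ := exists_join E hnd _ (Finset.univ.filter (fun u => u ∈ U)) rfl (by
    intro v
    have h := hcomp v
    rw [← Set.ncard_coe_finset]
    convert h using 2
    ext u
    simp [and_comm])
  have hodd : ∀ v, Odd (deg J v) ↔ v ∈ U := by
    intro v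
    rw [← ZMod.natCast_eq_one_iff_odd, hd v]
    by_cases h : v ∈ U <;> simp [h]
  have hE : J + (E - J) = E := add_tsub_cancel_of_le hJ
  refine ⟨J, E - J, hE, hodd, fun v => ?_, ?_⟩
  · have h1 : deg J v + deg (E - J) v = deg E v := by
      conv_rhs => rw [← hE]
      unfold deg
      rw [Multiset.filter_add, Multiset.card_add]
    have h2 := heven v
    rw [← h1] at h2
    rw [← hodd v]
    exact (Nat.even_add'.1 h2).symm
  · have h1 : mweight w J + mweight w (E - J) = mweight w E := by
      conv_rhs => rw [← hE]
      unfold mweight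
      rw [Multiset.map_add, Multiset.sum_add]
    rcases le_total (mweight w J) (mweight w (E - J)) with h | h
    · rw [min_eq_left h]; linarith
    · rw [min_eq_right h]; linarith
end

section
/- Graphic MDMTSP bound: let G be an unweighted connected graph with shortest-path metric, D ⊆ V(G) depots, and T an optimal tour using |E(T)| edges in which exactly the depots in D' ⊆ D have nonempty subtours. Then T contains a constrained spanning forest for (G, D') of weight (cardinality) at most |E(T)| − |D'|, and the tour F ∪̇ M produced by running Multi-Depot Christofides-Serdyukov with depot set D' satisfies |E(F ∪̇ M)| ≤ |E(T)| − |D'| + (1/2)(|E(T)| + 2(|D'| − 1)) = (3/2)|E(T)| − 1. -/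
open scoped Classical

def IsCSFgr {V : Type*} (D D' : Finset V) (F : Finset (Sym2 V)) : Prop :=
  (∀ e ∈ F, ¬ Sym2.IsDiag e) ∧
  (SimpleGraph.fromEdgeSet (↑F : Set (Sym2 V))).IsAcyclic ∧
  (∀ v, ∃ d ∈ D, Connects F.val v d) ∧
  ∀ v, (∃ e ∈ F, v ∈ e) → ∃ d ∈ D', Connects F.val v d

section helpers
variable {V : Type*}

theorem deg_add' (A B : Multiset (Sym2 V)) (v : V) : deg (A + B) v = deg A v + deg B v := by
  simp [deg]

theorem deg_cons' (e : Sym2 V) (B : Multiset (Sym2 V)) (v : V) :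
    deg (e ::ₘ B) v = deg B v + if v ∈ e then 1 else 0 := by
  by_cases h : v ∈ e <;> simp [deg, h]

theorem deg_pos' {T : Multiset (Sym2 V)} {e : Sym2 V} {v : V} (he : e ∈ T) (hv : v ∈ e) :
    0 < deg T v :=
  Multiset.card_pos_iff_exists_mem.2 ⟨e, Multiset.mem_filter.2 ⟨he, hv⟩⟩

theorem conn_mono {A B : Multiset (Sym2 V)} (h : ∀ e ∈ A, e ∈ B) {a b : V}
    (hc : Connects A a b) : Connects B a b :=
  Relation.ReflTransGen.mono (fun _ _ hx => h _ hx) _ _ hc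

theorem conn_symm {A : Multiset (Sym2 V)} {a b : V} (hc : Connects A a b) : Connects A b a := by
  induction hc with
  | refl => exact Relation.ReflTransGen.refl
  | tail _ h ih =>
    refine Relation.ReflTransGen.head ?_ ih
    rw [Sym2.eq_swap]; exact h

theorem conn_trans {A : Multiset (Sym2 V)} {a b c : V} (h : Connects A a b) (h2 : Connects A b c) :
    Connects A a c := Relation.ReflTransGen.trans h h2

theorem conn_edge {A : Multiset (Sym2 V)} {a b : V} (h : s(a, b) ∈ A) : Connects A a b :=
  Relation.ReflTransGen.single h

theorem conn_cons {A : Multiset (Sym2 V)} {u v a b : V} (h : Connects (s(u, v) ::ₘ A) a b) :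
    Connects A a b ∨ (Connects A a u ∧ Connects A v b) ∨ (Connects A a v ∧ Connects A u b) := by
  induction h with
  | refl => exact Or.inl Relation.ReflTransGen.refl
  | @tail x y _ hxy ih =>
    have hxy' : s(x, y) = s(u, v) ∨ s(x, y) ∈ A := by simpa using hxy
    have r : ∀ z, Connects A z z := fun z => Relation.ReflTransGen.refl
    rcases hxy' with h | h
    · rw [Sym2.eq_iff] at h
      rcases h with ⟨rfl, rfl⟩ | ⟨rfl, rfl⟩
      · rcases ih with h | ⟨h, h'⟩ | ⟨h, h'⟩
        · exact Or.inr (Or.inl ⟨h, r _⟩)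
        · exact Or.inr (Or.inl ⟨h, r _⟩)
        · exact Or.inl h
      · rcases ih with h | ⟨h, h'⟩ | ⟨h, h'⟩
        · exact Or.inr (Or.inr ⟨h, r _⟩)
        · exact Or.inl h
        · exact Or.inr (Or.inr ⟨h, r _⟩)
    · have h := conn_edge h
      rcases ih with h1 | ⟨h1, h'⟩ | ⟨h1, h'⟩
      · exact Or.inl (conn_trans h1 h)
      · exact Or.inr (Or.inl ⟨h1, conn_trans h' h⟩)
      · exact Or.inr (Or.inr ⟨h1, conn_trans h' h⟩)

theorem conn_covered {A : Multiset (Sym2 V)} {a b : V} (h : Connects A a b) :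
    a = b ∨ ((∃ e ∈ A, a ∈ e) ∧ ∃ e ∈ A, b ∈ e) := by
  have key : ∀ {x y : V}, Connects A x y → x = y ∨ ∃ e ∈ A, y ∈ e := by
    intro x y hxy
    rcases Relation.ReflTransGen.cases_tail hxy with h | ⟨c, _, h⟩
    · exact Or.inl h.symm
    · exact Or.inr ⟨_, h, by simp⟩
  rcases key h with h1 | h1
  · exact Or.inl h1
  · rcases key (conn_symm h) with h2 | h2
    · exact Or.inl h2.symm
    · exact Or.inr ⟨h2, h1⟩

theorem conn_cross {A : Multiset (Sym2 V)} {S : Finset V} {a b : V} (h : Connects A a b)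
    (ha : a ∉ S) (hb : b ∈ S) : ∃ x y, s(x, y) ∈ A ∧ x ∉ S ∧ y ∈ S := by
  induction h with
  | refl => exact absurd hb ha
  | @tail x y _ hxy ih =>
    by_cases hx : x ∈ S
    · exact ih hx
    · exact ⟨x, y, hxy, hx, hb⟩

theorem pm_of_join (U : Finset V) (w : Sym2 V → ℝ) (h0 : ∀ e, 0 ≤ w e)
    (htri : ∀ a b c : V, w s(a, c) ≤ w s(b, a) + w s(b, c)) (n : ℕ) :
    ∀ J : Multiset (Sym2 V), J.card = n → (∀ e ∈ J, ¬ Sym2.IsDiag e) →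
      (∀ v, v ∈ U ↔ Odd (deg J v)) → ∃ M, IsPM U M ∧ mweight w M ≤ mweight w J := by
  induction n using Nat.strong_induction_on with
  | _ n ih =>
  intro J hn hJ hU
  by_cases hd : ∀ v, deg J v ≤ 1
  · refine ⟨J, ⟨hJ, fun v => ?_⟩, le_rfl⟩
    have h1 := hd v
    have h2 := hU v
    split_ifs with h
    · have := (h2.1 h).pos
      omega
    · rw [h2, Nat.not_odd_iff_even] at h
      interval_cases h3 : deg J v
      · rfl
      · simp at h
  · push Not at hd
    obtain ⟨v, hv⟩ := hd
    obtain ⟨e, f, J', hJe, he, hf⟩ : ∃ e f J', J = e ::ₘ f ::ₘ J' ∧ v ∈ e ∧ v ∈ f := by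
      unfold deg at hv
      have hpos : 0 < (Multiset.filter (fun e => v ∈ e) J).card := by omega
      obtain ⟨e, he⟩ := Multiset.card_pos_iff_exists_mem.1 hpos
      obtain ⟨s, hs⟩ := Multiset.exists_cons_of_mem he
      rw [hs] at hv
      have hpos : 0 < s.card := by simpa using hv
      obtain ⟨f, hf⟩ := Multiset.card_pos_iff_exists_mem.1 hpos
      obtain ⟨t, ht⟩ := Multiset.exists_cons_of_mem hf
      have hf' : f ∈ Multiset.filter (fun e => v ∈ e) J := by rw [hs]; simp [hf]
      refine ⟨e, f, t + Multiset.filter (fun e => ¬ v ∈ e) J, ?_, (Multiset.mem_filter.1 he).2,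
        (Multiset.mem_filter.1 hf').2⟩
      conv_lhs => rw [← Multiset.filter_add_not (fun e => v ∈ e) J, hs, ht]
      simp
    obtain ⟨a, rfl⟩ := he
    obtain ⟨b, rfl⟩ := hf
    subst hJe
    have hva : v ≠ a := by simpa using hJ s(v, a) (by simp)
    have hvb : v ≠ b := by simpa using hJ s(v, b) (by simp)
    have hJ' : ∀ e ∈ J', ¬ e.IsDiag := fun e he => hJ e (by simp [he])
    simp only [Multiset.card_cons] at hn
    by_cases hab : a = b
    · subst hab
      obtain ⟨M, hM, hM2⟩ := ih J'.card (by omega) J' rfl hJ' (by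
        intro x
        rw [hU x, deg_cons', deg_cons']
        split_ifs <;> simp [parity_simps])
      refine ⟨M, hM, hM2.trans ?_⟩
      have := h0 s(v, a)
      simp only [mweight, Multiset.map_cons, Multiset.sum_cons]
      linarith
    · obtain ⟨M, hM, hM2⟩ := ih (J'.card + 1) (by omega) (s(a, b) ::ₘ J') (by simp) (by
        intro e he
        rcases Multiset.mem_cons.1 he with rfl | he
        · simpa using hab
        · exact hJ' e he) (by
        intro x
        rw [hU x, deg_cons', deg_cons', deg_cons']
        simp only [Sym2.mem_iff, Nat.odd_iff]
        grind)
      refine ⟨M, hM, hM2.trans ?_⟩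
      have := htri a v b
      simp only [mweight, Multiset.map_cons, Multiset.sum_cons]
      linarith

theorem path_join [DecidableEq V] {H : Multiset (Sym2 V)} (hH : ∀ e ∈ H, ¬ Sym2.IsDiag e) {a b : V}
    (hc : Connects H a b) (J : Finset (Sym2 V)) (hJ : ∀ e ∈ J, e ∈ H) :
    ∃ J' : Finset (Sym2 V), (∀ e ∈ J', e ∈ H) ∧
      ∀ v, Even (deg J'.val v + deg J.val v + (if v = a then 1 else 0) + if v = b then 1 else 0) := by
  induction hc with
  | refl => exact ⟨J, hJ, fun v => by split_ifs <;> simp [parity_simps]⟩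
  | @tail x y _ hxy ih =>
    obtain ⟨J1, h1, h2⟩ := ih
    have hne : x ≠ y := by simpa using hH _ hxy
    by_cases hm : s(x, y) ∈ J1
    · refine ⟨J1.erase s(x, y), fun e he => h1 e (Finset.mem_of_mem_erase he), fun v => ?_⟩
      have h3 : J1.val = s(x, y) ::ₘ (J1.erase s(x, y)).val := by
        rw [Finset.erase_val, Multiset.cons_erase hm]
      have h4 := h2 v
      rw [h3, deg_cons'] at h4
      simp only [Sym2.mem_iff, Nat.even_iff] at *
      grind
    · refine ⟨insert s(x, y) J1, ?_, fun v => ?_⟩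
      · intro e he
        rcases Finset.mem_insert.1 he with rfl | he
        · exact hxy
        · exact h1 e he
      · have h4 := h2 v
        rw [Finset.insert_val_of_notMem hm, deg_cons']
        simp only [Sym2.mem_iff, Nat.even_iff] at *
        grind

theorem join_exists [DecidableEq V] {H : Multiset (Sym2 V)} (hH : ∀ e ∈ H, ¬ Sym2.IsDiag e)
    (F : Multiset (Sym2 V)) (hF : ∀ e ∈ F, ¬ Sym2.IsDiag e)
    (hc : ∀ a b, s(a, b) ∈ F → Connects H a b) :
    ∃ J : Finset (Sym2 V), (∀ e ∈ J, e ∈ H) ∧ ∀ v, Even (deg J.val v + deg F v) := by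
  induction F using Multiset.induction_on with
  | empty => exact ⟨∅, by simp, by simp [deg]⟩
  | cons e F ih =>
    obtain ⟨J, h1, h2⟩ := ih (fun e he => hF e (by simp [he])) (fun a b h => hc a b (by simp [h]))
    induction e using Sym2.ind with
    | _ a b =>
    have hne : a ≠ b := by simpa using hF s(a, b) (by simp)
    obtain ⟨J', h3, h4⟩ := path_join hH (hc a b (by simp)) J h1
    refine ⟨J', h3, fun v => ?_⟩
    have h5 := h2 v
    have h6 := h4 v
    rw [deg_cons']
    simp only [Sym2.mem_iff, Nat.even_iff] at *
    grind

theorem connect_exists [DecidableEq V] (T : Multiset (Sym2 V)) (W D' : Finset V) (hne : D'.Nonempty)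
    (hDW : D' ⊆ W) (hT : ∀ v ∈ W, ∃ d ∈ D', Connects T v d) (F : Multiset (Sym2 V))
    (hF : ∀ e ∈ F, ∀ v ∈ e, v ∈ W) :
    ∃ (K : Multiset (Sym2 V)) (R : Finset V), (∀ e ∈ K, e ∈ F) ∧ R ⊆ D' ∧ R.Nonempty ∧
      R.card + K.card ≤ D'.card ∧ (∀ v ∈ W, ∃ d ∈ R, Connects (K + T) v d) ∧
      ∀ a b, s(a, b) ∈ F → Connects (K + T) a b := by
  induction F using Multiset.induction_on with
  | empty => exact ⟨0, D', by simp, by simp, hne, by simp, by simpa using hT, by simp⟩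
  | cons e F ih =>
    obtain ⟨K, R, h1, h2, h3, h4, h5, h6⟩ := ih (fun e he => hF e (by simp [he]))
    induction e using Sym2.ind with
    | _ a b =>
    by_cases hab : Connects (K + T) a b
    · refine ⟨K, R, fun e he => by simp [h1 e he], h2, h3, h4, h5, ?_⟩
      intro x y hxy
      rcases Multiset.mem_cons.1 hxy with h | h
      · rw [Sym2.eq_iff] at h
        rcases h with ⟨rfl, rfl⟩ | ⟨rfl, rfl⟩
        · exact hab
        · exact conn_symm hab
      · exact h6 x y h
    · obtain ⟨p, hp, hap⟩ := h5 a (hF s(a, b) (by simp) a (by simp))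
      obtain ⟨q, hq, hbq⟩ := h5 b (hF s(a, b) (by simp) b (by simp))
      have hpq : p ≠ q := by
        rintro rfl
        exact hab (conn_trans hap (conn_symm hbq))
      have hmono : ∀ {x y}, Connects (K + T) x y → Connects (s(a, b) ::ₘ K + T) x y := by
        intro x y h
        refine conn_mono ?_ h
        intro e he
        rw [Multiset.cons_add]; simp only [Multiset.mem_cons]; exact Or.inr he
      have hE : Connects (s(a, b) ::ₘ K + T) a b := conn_edge (by simp)
      refine ⟨s(a, b) ::ₘ K, R.erase q, ?_, (Finset.erase_subset _ _).trans h2,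
        ⟨p, by simp [hp, hpq]⟩, ?_, ?_, ?_⟩
      · intro e he
        rcases Multiset.mem_cons.1 he with rfl | he
        · simp
        · simp [h1 e he]
      · rw [Finset.card_erase_of_mem hq, Multiset.card_cons]
        have := Finset.card_pos.2 h3
        omega
      · intro v hv
        obtain ⟨d, hd, hvd⟩ := h5 v hv
        by_cases hdq : d = q
        · subst hdq
          exact ⟨p, by simp [hp, hpq], conn_trans (hmono hvd) (conn_trans (conn_symm (hmono hbq))
            (conn_trans (conn_symm hE) (hmono hap)))⟩
        · exact ⟨d, by simp [hd, hdq], hmono hvd⟩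
      · intro x y hxy
        rcases Multiset.mem_cons.1 hxy with h | h
        · rw [Sym2.eq_iff] at h
          rcases h with ⟨rfl, rfl⟩ | ⟨rfl, rfl⟩
          · exact hE
          · exact conn_symm hE
        · exact hmono (h6 x y h)

theorem indep_exists [DecidableEq V] (X : Finset V) (F : Multiset (Sym2 V)) :
    ∃ R : Finset V, R ⊆ X ∧ X.card ≤ R.card + F.card ∧
      ∀ a ∈ R, ∀ b ∈ R, Connects F a b → a = b := by
  induction F using Multiset.induction_on with
  | empty =>
    refine ⟨X, le_rfl, by simp, fun a _ b _ h => ?_⟩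
    rcases conn_covered h with h | h
    · exact h
    · simp at h
  | cons e F ih =>
    obtain ⟨R, h1, h2, h3⟩ := ih
    induction e using Sym2.ind with
    | _ u v =>
    by_cases hq : ∃ q ∈ R, Connects F q v
    · obtain ⟨q, hq, hqv⟩ := hq
      refine ⟨R.erase q, (Finset.erase_subset _ _).trans h1, ?_, ?_⟩
      · rw [Finset.card_erase_of_mem hq, Multiset.card_cons]
        omega
      · intro a ha b hb hab
        obtain ⟨ha1, ha⟩ := Finset.mem_erase.1 ha
        obtain ⟨hb1, hb⟩ := Finset.mem_erase.1 hb
        rcases conn_cons hab with h | ⟨_, h⟩ | ⟨h, _⟩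
        · exact h3 a ha b hb h
        · exact absurd (h3 b hb q hq (conn_trans (conn_symm h) (conn_symm hqv))) hb1
        · exact absurd (h3 a ha q hq (conn_trans h (conn_symm hqv))) ha1
    · push Not at hq
      refine ⟨R, h1, by rw [Multiset.card_cons]; omega, ?_⟩
      intro a ha b hb hab
      rcases conn_cons hab with h | ⟨_, h⟩ | ⟨h, _⟩
      · exact h3 a ha b hb h
      · exact absurd (conn_symm h) (hq b hb)
      · exact absurd h (hq a ha)

theorem card_le_of_conn [DecidableEq V] (X D' : Finset V) (F : Multiset (Sym2 V))
    (h : ∀ v ∈ X, ∃ d ∈ D', Connects F v d) : X.card ≤ F.card + D'.card := by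
  obtain ⟨R, h1, h2, h3⟩ := indep_exists X F
  choose! f hf hf2 using h
  have : R.card ≤ D'.card := by
    refine Finset.card_le_card_of_injOn f (fun x hx => hf x (h1 hx)) ?_
    intro x hx y hy hxy
    have e : f x = f y := hxy
    refine h3 x hx y hy (conn_trans (hf2 x (h1 hx)) ?_)
    rw [e]
    exact conn_symm (hf2 y (h1 hy))
  omega

theorem handshake [Fintype V] (T : Multiset (Sym2 V)) (hT : ∀ e ∈ T, ¬ Sym2.IsDiag e) :
    ∑ v, deg T v = 2 * T.card := by
  classical
  induction T using Multiset.induction_on with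
  | empty => simp [deg]
  | cons e T ih =>
    simp only [deg_cons', Finset.sum_add_distrib, ih (fun e he => hT e (by simp [he])),
      Multiset.card_cons]
    induction e using Sym2.ind with
    | _ a b =>
    have hne : a ≠ b := by simpa using hT s(a, b) (by simp)
    have : (Finset.univ.filter (fun x => x = a ∨ x = b)) = {a, b} := by ext; simp
    simp only [Finset.sum_boole, Sym2.mem_iff, this, Finset.card_pair hne]
    push_cast
    ring

theorem forest_exists [Fintype V] [DecidableEq V] (T : Multiset (Sym2 V)) (W D' : Finset V)
    (hT : ∀ e ∈ T, ¬ Sym2.IsDiag e) (hDW : D' ⊆ W)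
    (hc : ∀ v ∈ W, ∃ d ∈ D', Connects T v d) (hW : ∀ e ∈ T, ∀ v ∈ e, v ∈ W) :
    ∃ F : Finset (Sym2 V), (∀ e ∈ F, e ∈ T) ∧ F.card + D'.card = W.card ∧
      (SimpleGraph.fromEdgeSet (↑F : Set (Sym2 V))).IsAcyclic ∧
      ∀ v ∈ W, ∃ d ∈ D', Connects F.val v d := by
  let P : Finset V → Prop := fun S => D' ⊆ S ∧ S ⊆ W ∧ ∃ F : Finset (Sym2 V),
    (∀ e ∈ F, e ∈ T) ∧ F.card + D'.card = S.card ∧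
      (SimpleGraph.fromEdgeSet (↑F : Set (Sym2 V))).IsAcyclic ∧
      (∀ e ∈ F, ∀ v ∈ e, v ∈ S) ∧
      ∀ v ∈ S, ∃ d ∈ D', Connects F.val v d
  have hP0 : P D' := ⟨le_rfl, hDW, ∅, by simp, by simp, by simp, by simp,
    fun v hv => ⟨v, hv, Relation.ReflTransGen.refl⟩⟩
  obtain ⟨S, hS, hmax⟩ := Finset.exists_max_image (Finset.univ.filter P) Finset.card
    ⟨D', by simp [hP0]⟩
  obtain ⟨h1, h2, F, h3, h4, h5, h6, h7⟩ := (Finset.mem_filter.1 hS).2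
  by_cases hSW : S = W
  · subst hSW
    exact ⟨F, h3, h4, h5, h7⟩
  exfalso
  obtain ⟨v, hvW, hvS⟩ := Finset.exists_of_ssubset (h2.ssubset_of_ne hSW)
  obtain ⟨d, hd, hvd⟩ := hc v hvW
  obtain ⟨x, y, hxy, hx, hy⟩ := conn_cross hvd hvS (h1 hd)
  have hne : x ≠ y := by simpa using hT _ hxy
  have hxyF : s(x, y) ∉ F := fun h => hx (h6 _ h x (by simp))
  have hmono : ∀ {p q}, Connects F.val p q → Connects (insert s(x, y) F).val p q :=
    fun h => conn_mono (fun e he => Finset.mem_insert_of_mem he) h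
  have hP : P (insert x S) := by
    refine ⟨h1.trans (Finset.subset_insert _ _), Finset.insert_subset (hW _ hxy x (by simp)) h2,
      insert s(x, y) F, ?_, ?_, ?_, ?_, ?_⟩
    · intro e he
      rcases Finset.mem_insert.1 he with rfl | he
      · exact hxy
      · exact h3 e he
    · rw [Finset.card_insert_of_notMem hxyF, Finset.card_insert_of_notMem hx]; omega
    · have hE : SimpleGraph.fromEdgeSet (↑(insert s(x, y) F) : Set (Sym2 V)) =
          SimpleGraph.fromEdgeSet (↑F : Set (Sym2 V)) ⊔ SimpleGraph.edge x y := by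
        rw [SimpleGraph.edge, ← SimpleGraph.fromEdgeSet_union, Finset.coe_insert, Set.insert_eq,
          Set.union_comm]
      rw [hE]
      refine SimpleGraph.IsAcyclic.sup_edge_of_not_reachable ?_ h5
      rintro ⟨p⟩
      cases p with
      | nil => exact hne rfl
      | cons h _ =>
        rw [SimpleGraph.fromEdgeSet_adj] at h
        exact hx (h6 _ h.1 x (by simp))
    · intro e he v hv
      rcases Finset.mem_insert.1 he with rfl | he
      · rcases Sym2.mem_iff.1 hv with rfl | rfl
        · simp
        · simp [hy]
      · exact Finset.mem_insert_of_mem (h6 e he v hv)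
    · intro v hv
      rcases Finset.mem_insert.1 hv with rfl | hv
      · obtain ⟨d, hd, h⟩ := h7 y hy
        exact ⟨d, hd, conn_trans (conn_edge (Finset.mem_insert_self _ _)) (hmono h)⟩
      · obtain ⟨d, hd, h⟩ := h7 v hv
        exact ⟨d, hd, hmono h⟩
  have := hmax (insert x S) (by simp [hP])
  rw [Finset.card_insert_of_notMem hx] at this
  omega

end helpers

theorem stmt13 {V : Type*} [Fintype V] [DecidableEq V] (G : SimpleGraph V)
    (hG : G.Connected) (D : Finset V)
    (wd : Sym2 V → ℝ)
    (hwd : ∀ u v : V, wd s(u, v) = G.dist u v)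
    (T : Multiset (Sym2 V)) (hT : IsTour D T)
    (hTG : ∀ e ∈ T, e ∈ G.edgeSet)
    (hTmin : ∀ T', IsTour D T' → mweight wd T ≤ mweight wd T')
    (D' : Finset V) (hD' : ∀ x, x ∈ D' ↔ x ∈ D ∧ ∃ e ∈ T, x ∈ e)
    (hD'ne : D'.Nonempty)
    (F : Finset (Sym2 V)) (hF : IsCSFgr D D' F)
    (hFmin : ∀ F₂, IsCSFgr D D' F₂ → ∑ e ∈ F, wd e ≤ ∑ e ∈ F₂, wd e)
    (U : Finset V) (hU : ∀ v, v ∈ U ↔ Odd (deg F.val v))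
    (M : Multiset (Sym2 V)) (hM : IsPM U M)
    (hMmin : ∀ M', IsPM U M' → mweight wd M ≤ mweight wd M') :
    (∃ F' : Finset (Sym2 V), F'.val ≤ T ∧ IsCSFgr D D' F' ∧
      ∑ e ∈ F', wd e ≤ mweight wd T - D'.card) ∧
    mweight wd (F.val + M) ≤ 3 / 2 * mweight wd T - 1 := by
  obtain ⟨hTd, hTe, hTc⟩ := hT
  have hcard : ∀ E : Multiset (Sym2 V), (∀ e ∈ E, wd e = 1) → mweight wd E = E.card := by
    intro E hE
    rw [mweight, Multiset.map_congr rfl hE]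
    simp
  have hw1 : ∀ e ∈ G.edgeSet, wd e = 1 := by
    intro e he
    induction e using Sym2.ind with
    | _ a b =>
    rw [hwd, SimpleGraph.dist_eq_one_iff_adj.2 he]
    simp
  have hwge : ∀ e : Sym2 V, ¬ e.IsDiag → 1 ≤ wd e := by
    intro e he
    induction e using Sym2.ind with
    | _ a b =>
    rw [hwd]
    have := hG.pos_dist_of_ne (u := a) (v := b) (by simpa using he)
    exact_mod_cast this
  have h0 : ∀ e, 0 ≤ wd e := by
    intro e
    induction e using Sym2.ind with
    | _ a b => rw [hwd]; positivity
  have htri : ∀ a b c : V, wd s(a, c) ≤ wd s(b, a) + wd s(b, c) := by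
    intro a b c
    rw [hwd, hwd, hwd, SimpleGraph.dist_comm (u := b) (v := a)]
    exact_mod_cast hG.dist_triangle
  have hTw : mweight wd T = T.card := hcard T (fun e he => hw1 e (hTG e he))
  -- the covered vertices
  let W : Finset V := Finset.univ.filter (fun v => ∃ e ∈ T, v ∈ e)
  have hWm : ∀ v, v ∈ W ↔ ∃ e ∈ T, v ∈ e := fun v => by simp [W]
  have hDW : D' ⊆ W := fun x hx => (hWm x).2 ((hD' x).1 hx).2
  have hWT : ∀ e ∈ T, ∀ v ∈ e, v ∈ W := fun e he v hv => (hWm v).2 ⟨e, he, hv⟩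
  have hTcW : ∀ v ∈ W, ∃ d ∈ D', Connects T v d := by
    intro v hv
    obtain ⟨d, hd, hvd⟩ := hTc v
    refine ⟨d, (hD' d).2 ⟨hd, ?_⟩, hvd⟩
    rcases conn_covered hvd with rfl | h
    · exact (hWm v).1 hv
    · exact h.2
  have hDn : ∀ v, v ∉ W → v ∈ D := by
    intro v hv
    obtain ⟨d, hd, hvd⟩ := hTc v
    rcases conn_covered hvd with rfl | h
    · exact hd
    · exact absurd ((hWm v).2 h.1) hv
  have hWcard : W.card ≤ T.card := by
    have h1 := handshake T hTd
    have h2 : ∑ v ∈ W, 2 ≤ ∑ v, deg T v := by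
      refine (Finset.sum_le_sum ?_).trans (Finset.sum_le_sum_of_subset (Finset.subset_univ W))
      intro v hv
      obtain ⟨e, he, hve⟩ := (hWm v).1 hv
      have hpos : 0 < deg T v :=
        deg_pos' he hve
      obtain ⟨k, hk⟩ := hTe v
      omega
    rw [Finset.sum_const, smul_eq_mul] at h2
    omega
  obtain ⟨F', hF1, hF2, hF3, hF4⟩ := forest_exists T W D' hTd hDW hTcW hWT
  have hF'w : ∑ e ∈ F', wd e = F'.card := by
    rw [Finset.sum_congr rfl (fun e he => hw1 e (hTG e (hF1 e he)))]
    simp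
  have hF'csf : IsCSFgr D D' F' := by
    refine ⟨fun e he => hTd e (hF1 e he), hF3, ?_, ?_⟩
    · intro v
      by_cases hv : v ∈ W
      · obtain ⟨d, hd, h⟩ := hF4 v hv
        exact ⟨d, ((hD' d).1 hd).1, h⟩
      · exact ⟨v, hDn v hv, Relation.ReflTransGen.refl⟩
    · rintro v ⟨e, he, hv⟩
      exact hF4 v (hWT e (hF1 e he) v hv)
  have hF2' : (F'.card : ℝ) + D'.card = W.card := by exact_mod_cast hF2
  have hWcard' : (W.card : ℝ) ≤ T.card := by exact_mod_cast hWcard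
  refine ⟨⟨F', ?_, hF'csf, ?_⟩, ?_⟩
  · exact (Multiset.le_iff_subset F'.nodup).2 (fun e he => hF1 e he)
  · rw [hF'w, hTw]; linarith
  -- structure of the minimum forest
  obtain ⟨hFd, hFa, hFc, hFc'⟩ := hF
  have hFle : ∑ e ∈ F, wd e ≤ F'.card := hF'w ▸ hFmin F' hF'csf
  let X : Finset V := D' ∪ Finset.univ.filter (fun v => ∃ e ∈ F, v ∈ e)
  have hXc : X.card ≤ F.val.card + D'.card := by
    refine card_le_of_conn X D' F.val ?_
    intro v hv
    rcases Finset.mem_union.1 hv with hv | hv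
    · exact ⟨v, hv, Relation.ReflTransGen.refl⟩
    · exact hFc' v (Finset.mem_filter.1 hv).2
  have hWX : W ⊆ X := by
    intro v hv
    by_cases hvD : v ∈ D
    · exact Finset.mem_union_left _ ((hD' v).2 ⟨hvD, (hWm v).1 hv⟩)
    · obtain ⟨d, hd, hvd⟩ := hFc v
      rcases conn_covered hvd with rfl | h
      · exact absurd hd hvD
      · exact Finset.mem_union_right _ (Finset.mem_filter.2 ⟨Finset.mem_univ _, h.1⟩)
  have hFcard : (F.card : ℝ) ≤ ∑ e ∈ F, wd e := by
    have := Finset.sum_le_sum (fun e he => hwge e (hFd e he))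
    simpa using this
  have hFF' : F.card ≤ F'.card := by exact_mod_cast hFcard.trans hFle
  have hXW : W = X := Finset.eq_of_subset_of_card_le hWX (by
    have : F.val.card = F.card := rfl
    omega)
  have hFW : ∀ e ∈ F.val, ∀ v ∈ e, v ∈ W := by
    intro e he v hv
    rw [hXW]
    exact Finset.mem_union_right _ (Finset.mem_filter.2 ⟨Finset.mem_univ _, e, he, hv⟩)
  have hF'F : F'.card ≤ F.card := by
    have : F.val.card = F.card := rfl
    rw [← hXW] at hXc
    omega
  have hF'F' : (F'.card : ℝ) ≤ F.card := by exact_mod_cast hF'F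
  have hFw1 : ∀ e ∈ F, wd e = 1 := by
    have h := (Finset.sum_eq_sum_iff_of_le (f := fun _ => (1 : ℝ)) (g := wd) (s := F)
      (fun e he => hwge e (hFd e he))).1 (by simp; linarith)
    exact fun e he => (h e he).symm
  -- connecting the subtours
  obtain ⟨K, R, hK1, _, hR, hRK, _, hKc⟩ := connect_exists T W D' hD'ne hDW hTcW F.val hFW
  have hKcard : K.card + 1 ≤ D'.card := by
    have := Finset.card_pos.2 hR
    omega
  have hKcard' : (K.card : ℝ) + 1 ≤ D'.card := by exact_mod_cast hKcard
  have hKw : mweight wd K = K.card := hcard K (fun e he => hFw1 e (hK1 e he))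
  let H : Multiset (Sym2 V) := K + (K + T)
  have hHd : ∀ e ∈ H, ¬ e.IsDiag := by
    intro e he
    rcases Multiset.mem_add.1 he with he | he
    · exact hFd e (hK1 e he)
    · rcases Multiset.mem_add.1 he with he | he
      · exact hFd e (hK1 e he)
      · exact hTd e he
  obtain ⟨J, hJ1, hJ2⟩ := join_exists hHd F.val hFd (fun a b hab =>
    conn_mono (fun e he => Multiset.mem_add.2 (Or.inr he)) (hKc a b hab))
  have hJH : J.val ≤ H := (Multiset.le_iff_subset J.nodup).2 (fun e he => hJ1 e he)
  obtain ⟨J', hJ'⟩ := Multiset.le_iff_exists_add.1 hJH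
  have hHe : ∀ v, Even (deg J.val v + deg J' v) := by
    intro v
    rw [← deg_add', ← hJ']
    simp only [H, deg_add']
    have := hTe v
    rw [Nat.even_iff] at *
    omega
  have hwadd : ∀ A B : Multiset (Sym2 V), mweight wd (A + B) = mweight wd A + mweight wd B := by
    intro A B; simp [mweight]
  have hHw : mweight wd J.val + mweight wd J' = K.card + (K.card + T.card) := by
    rw [← hwadd, ← hJ']
    simp only [H, hwadd, hKw, hTw]
  obtain ⟨M1, hM1, hM1w⟩ := pm_of_join U wd h0 htri _ J.val rfl (fun e he => hHd e (hJ1 e he))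
    (by
      intro v
      rw [hU v]
      have := hJ2 v
      rw [Nat.even_iff] at this
      rw [Nat.odd_iff, Nat.odd_iff]
      omega)
  obtain ⟨M2, hM2, hM2w⟩ := pm_of_join U wd h0 htri _ J' rfl (fun e he => hHd e (by
      rw [hJ']; exact Multiset.mem_add.2 (Or.inr he)))
    (by
      intro v
      rw [hU v]
      have := hJ2 v
      have h2 := hHe v
      rw [Nat.even_iff] at this h2
      rw [Nat.odd_iff, Nat.odd_iff]
      omega)
  have e1 := hMmin M1 hM1
  have e2 := hMmin M2 hM2
  have e3 : mweight wd F.val = ∑ e ∈ F, wd e := rfl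
  rw [hwadd, e3, hTw]
  linarith
end
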